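/- arXiv:2105.00541 — 2 statements merged into one kernel-verified Lean document; each statement's English description precedes it below -/
import Mathlib

section
/- Let V = (V_1,…,V_k) be subsets of {1,…,n} such that the column matroid M(V) of M_V is a positroid of rank k and M_V is a minimal representation, i.e., |∪_{i∈T} V_i| ≥ max_{i∈T}|V_i| + |T| − 1 for every nonempty T ⊆ {1,…,k}. Then in ℝ[x] the radical of the ideal generated by the product ∏_{a=1}^{n} Δ_{I_a}(x) of the Grassmann necklace minors equals the radical of the ideal generated by the product ∏_{a=1}^{n} Δ_{I*_a}(x) of the reverse Grassmann necklace minors. -/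
open MvPolynomial

/-- The polynomial ring `ℝ[x_{i,j}]` in `k·n` independent variables. -/
abbrev PR (k n : ℕ) : Type := MvPolynomial (Fin k × Fin n) ℝ

/-- Its field of fractions `K`. -/
abbrev FF (k n : ℕ) : Type := FractionRing (PR k n)

/-- The variable-valued matrix `M_V` with polynomial entries: the `(i,j)` entry is
`x_{i,j}` if `j ∈ V_i` and `0` otherwise. -/
noncomputable def MVpoly (k n : ℕ) (V : Fin k → Finset (Fin n)) :
    Matrix (Fin k) (Fin n) (PR k n) :=
  Matrix.of fun i j => if j ∈ V i then X (i, j) else 0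

/-- The variable-valued matrix `M_V` over the field `K`. -/
noncomputable def MV (k n : ℕ) (V : Fin k → Finset (Fin n)) :
    Matrix (Fin k) (Fin n) (FF k n) :=
  Matrix.of fun i j => algebraMap (PR k n) (FF k n) (MVpoly k n V i j)

/-- Linear independence over `F` of the columns of a matrix indexed by a set `S`. -/
def ColsIndep {k n : ℕ} {F : Type*} [Field F] (M : Matrix (Fin k) (Fin n) F)
    (S : Finset (Fin n)) : Prop :=
  LinearIndependent F (fun j : {x : Fin n // x ∈ S} => fun i : Fin k => M i (j : Fin n))

/-- The minor `Δ_S(x) ∈ ℝ[x]` of `M_V` on a `k`-element set `S` of columns (and `0`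
if `S` does not have `k` elements); well defined up to the sign of the chosen
enumeration of `S`. -/
noncomputable def minorF (k n : ℕ) (V : Fin k → Finset (Fin n))
    (S : Finset (Fin n)) : PR k n :=
  if h : S.card = k then
    ((MVpoly k n V).submatrix id
      (fun i : Fin k => ((S.equivFin.symm (Fin.cast h.symm i)) : Fin n))).det
  else 0

/-- The position of `x` in the cyclic order `<ₐ` starting at `a`. -/
def keyF (n : ℕ) (a x : Fin n) : ℕ := ((x : ℕ) + n - (a : ℕ)) % n

/-- The Gale order `≤ₐ` associated to the cyclic shift `<ₐ`:  `S ≤ₐ T` iff the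
sorted lists of positions agree in length and are pointwise `≤`. -/
def GaleLEat (n : ℕ) (a : Fin n) (S T : Finset (Fin n)) : Prop :=
  List.Forall₂ (· ≤ ·)
    ((S.image (keyF n a)).sort (· ≤ ·)) ((T.image (keyF n a)).sort (· ≤ ·))

/-- `S` is a basis of columns of `M_V`: it has `k` elements and its maximal minor is
nonzero. -/
def IsBasisF (k n : ℕ) (V : Fin k → Finset (Fin n)) (S : Finset (Fin n)) : Prop :=
  S.card = k ∧ minorF k n V S ≠ 0

/-- `S` is the Grassmann necklace element `I_a`: the `≤ₐ`-least basis. -/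
def NecklaceAt (k n : ℕ) (V : Fin k → Finset (Fin n)) (a : Fin n)
    (S : Finset (Fin n)) : Prop :=
  IsBasisF k n V S ∧ ∀ T : Finset (Fin n), IsBasisF k n V T → GaleLEat n a S T

/-- `S` is the reverse Grassmann necklace element `I*_a`: the `≤ₐ`-greatest basis. -/
def CoNecklaceAt (k n : ℕ) (V : Fin k → Finset (Fin n)) (a : Fin n)
    (S : Finset (Fin n)) : Prop :=
  IsBasisF k n V S ∧ ∀ T : Finset (Fin n), IsBasisF k n V T → GaleLEat n a T S

/-- The column matroid `M(V)` is a positroid of rank `k`: some real `k×n` matrix of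
rank `k` with all (column-ordered) `k×k` minors nonnegative has exactly the same
linearly independent column sets as `M_V`. -/
def IsPositroidRep (k n : ℕ) (V : Fin k → Finset (Fin n)) : Prop :=
  ∃ A : Matrix (Fin k) (Fin n) ℝ, A.rank = k ∧
    (∀ f : Fin k → Fin n, StrictMono f → 0 ≤ (A.submatrix id f).det) ∧
    (∀ S : Finset (Fin n), ColsIndep A S ↔ ColsIndep (MV k n V) S)

/-!
Let `P` be a prime ideal and suppose that the minors on all `I_a` stay nonzero modulo `P`.  A set of
columns that is a basis over the residue field of `P` has a nonzero minor to begin with, so `I_a`,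
which meets each initial segment `X` of `<_a` in as many elements as any nonvanishing minor allows,
meets `X` in exactly as many elements as the rank of `X` over the residue field.  Now `I*_b` has the
same maximality property for the final segments of `<_b`, and initial and final segments alike are
just the cyclic intervals.  Hence `I*_b` meets each final segment of `<_b` in as many elements as
the rank of that segment.  Such a set is independent: running through the segments in increasing
order, each of its elements raises the rank when it is reached.  So the minors on all `I*_b` are
nonzero modulo `P`.  The argument is symmetric, so the two products lie in the same prime ideals.
-/

open Finset Module

section LinearAlgebra

variable {α K W : Type*} [DivisionRing K] [AddCommGroup W] [Module K W] {v : α → W}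

theorem finrank_image_coe_finset_eq_card {B : Finset α} (hB : LinearIndepOn K v B) :
    (v '' B).finrank K = #B := by
  rw [Set.image_eq_range]
  exact (finrank_span_eq_card hB).trans (Fintype.card_coe B)

theorem exists_basis_finrank_image_le_card_filter [Finite α]
    (hspan : Submodule.span K (Set.range v) = ⊤) (p : α → Prop) [DecidablePred p] :
    ∃ T : Finset α, LinearIndepOn K v T ∧ #T = finrank K W ∧
      (v '' {x | p x}).finrank K ≤ #{x ∈ T | p x} := by
  have : FiniteDimensional K W := ⟨hspan ▸ Submodule.fg_span (Set.finite_range v)⟩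
  obtain ⟨b, hbp, -, hpb, hb⟩ :=
    exists_linearIndepOn_extension (linearIndepOn_empty K v) (Set.empty_subset {x | p x})
  obtain ⟨c, -, hbc, hc_span, hc⟩ := exists_linearIndepOn_extension hb (Set.subset_univ b)
  lift b to Finset α using b.toFinite
  lift c to Finset α using c.toFinite
  refine ⟨c, hc, ?_, ?_⟩
  · have hc_top : Submodule.span K (v '' c) = ⊤ := by
      rwa [Set.image_univ, ← Submodule.span_le, hspan, top_le_iff] at hc_span
    rw [← finrank_image_coe_finset_eq_card hc, Set.finrank, hc_top, finrank_top]
  · calc (v '' {x | p x}).finrank K ≤ (v '' b).finrank K :=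
          Submodule.finrank_mono (Submodule.span_le.2 hpb)
      _ = #b := finrank_image_coe_finset_eq_card hb
      _ ≤ #{x ∈ c | p x} :=
          card_le_card fun x hx => mem_filter.2 ⟨mod_cast hbc hx, hbp hx⟩

section FiniteDimensional

variable [FiniteDimensional K W]

theorem card_filter_le_finrank_image {B : Finset α} (hB : LinearIndepOn K v B)
    (p : α → Prop) [DecidablePred p] : #{x ∈ B | p x} ≤ (v '' {x | p x}).finrank K := by
  have hBp : LinearIndepOn K v ↑(B.filter p) := hB.mono (coe_subset.2 (filter_subset p B))
  rw [← finrank_image_coe_finset_eq_card hBp]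
  exact Submodule.finrank_mono (Submodule.span_mono (Set.image_mono fun x hx =>
    (mem_filter.1 hx).2))

theorem card_filter_eq_finrank_image_of_isMaxOn [Finite α] {𝓑 : Set (Finset α)}
    (h𝓑 : ∀ T : Finset α, LinearIndepOn K v T → #T = finrank K W → T ∈ 𝓑) {B : Finset α}
    (hB : LinearIndepOn K v B) (hB_card : #B = finrank K W) {p : α → Prop} [DecidablePred p]
    (hB_max : IsMaxOn (fun T : Finset α => #{x ∈ T | p x}) 𝓑 B) :
    #{x ∈ B | p x} = (v '' {x | p x}).finrank K := by
  have hspan : Submodule.span K (Set.range v) = ⊤ := by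
    refine top_unique ?_
    rw [← hB.span_eq_top_of_card_eq_finrank' (by simpa using hB_card)]
    exact Submodule.span_mono (Set.range_comp_subset_range _ v)
  obtain ⟨T, hT, hT_card, hpT⟩ := exists_basis_finrank_image_le_card_filter hspan p
  exact (card_filter_le_finrank_image hB p).antisymm (hpT.trans (hB_max (h𝓑 T hT hT_card)))

end FiniteDimensional

theorem linearIndepOn_of_card_filter_eq_finrank_image {key : α → ℕ}
    (hkey : Function.Injective key) {B : Finset α}
    (hB : ∀ t, #{x ∈ B | key x < t} = (v '' {x | key x < t}).finrank K) :
    LinearIndepOn K v B := by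
  classical
  suffices hseg : ∀ t, LinearIndepOn K v ↑{x ∈ B | key x < t} by
    convert hseg (B.sup key + 1)
    exact (filter_true_of_mem fun x hx => Nat.lt_succ_of_le (le_sup hx)).symm
  intro t
  induction t with
  | zero => simp
  | succ t ih =>
    by_cases hx : ∃ x ∈ B, key x = t
    · obtain ⟨x, hxB, rfl⟩ := hx
      have hB_insert : {y ∈ B | key y < key x + 1} = insert x {y ∈ B | key y < key x} := by
        ext y
        grind [hkey.eq_iff]
      have hseg_insert : {y | key y < key x + 1} = insert x {y | key y < key x} := by
        ext y
        grind [hkey.eq_iff]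
      rw [hB_insert, coe_insert]
      refine ih.insert fun hx_span => ?_
      have hx_seg : v x ∈ Submodule.span K (v '' {y | key y < key x}) :=
        Submodule.span_mono (Set.image_mono fun y hy => (mem_filter.1 hy).2) hx_span
      have hrank := hB (key x + 1)
      rw [hB_insert, card_insert_of_notMem (by simp), hB, hseg_insert, Set.image_insert_eq,
        Set.finrank, Set.finrank, Submodule.span_insert_eq_span hx_seg] at hrank
      omega
    · convert ih using 3
      grind

theorem linearIndepOn_of_forall_exists_isMaxOn [Finite α] [FiniteDimensional K W]
    {𝓑 : Set (Finset α)} (h𝓑 : ∀ T : Finset α, LinearIndepOn K v T → #T = finrank K W → T ∈ 𝓑)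
    {key : α → ℕ} (hkey : Function.Injective key) {J : Finset α} (hJ : J ∈ 𝓑)
    (hJ_max : ∀ t, IsMaxOn (fun T : Finset α => #{x ∈ T | key x < t}) 𝓑 J)
    (hI : ∀ t, ∃ I ∈ 𝓑, LinearIndepOn K v I ∧ #I = finrank K W ∧
      IsMaxOn (fun T : Finset α => #{x ∈ T | key x < t}) 𝓑 I) :
    LinearIndepOn K v J := by
  refine linearIndepOn_of_card_filter_eq_finrank_image hkey fun t => ?_
  obtain ⟨I, hI𝓑, hI_indep, hI_card, hI_max⟩ := hI t
  rw [← card_filter_eq_finrank_image_of_isMaxOn h𝓑 hI_indep hI_card hI_max]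
  exact (hI_max hJ).antisymm (hJ_max t hI𝓑)

end LinearAlgebra

section Minors

variable {R : Type*} [CommRing R] {k n : ℕ}

/-- The maximal minor of a `k × n` matrix on a `k`-element set `S` of columns, enumerated by
`S.equivFin`, and `0` if `S` does not have `k` elements; `minorF` is the case of `MVpoly`. -/
noncomputable def maxMinor (M : Matrix (Fin k) (Fin n) R) (S : Finset (Fin n)) : R :=
  if h : #S = k then
    (M.submatrix id fun i : Fin k => (S.equivFin.symm (Fin.cast h.symm i) : Fin n)).det
  else 0

/-- The `k`-element sets of columns of a `k × n` matrix whose maximal minor is nonzero.  Over a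
domain these are the bases of the column matroid of a matrix of rank `k`; over a ring with zero
divisors they need not form a matroid. -/
def columnBases (M : Matrix (Fin k) (Fin n) R) : Set (Finset (Fin n)) :=
  {S | #S = k ∧ maxMinor M S ≠ 0}

theorem maxMinor_map {A : Type*} [CommRing A] (φ : R →+* A) (M : Matrix (Fin k) (Fin n) R)
    (S : Finset (Fin n)) : maxMinor (M.map φ) S = φ (maxMinor M S) := by
  unfold maxMinor
  split_ifs
  · rw [RingHom.map_det]
    rfl
  · rw [map_zero]

theorem map_maxMinor_ne_zero_iff_linearIndepOn {K : Type*} [Field K] (φ : R →+* K)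
    (M : Matrix (Fin k) (Fin n) R) {S : Finset (Fin n)} (hS : #S = k) :
    φ (maxMinor M S) ≠ 0 ↔ LinearIndepOn K (M.map φ).col S := by
  rw [← maxMinor_map, maxMinor, dif_pos hS, ← isUnit_iff_ne_zero, ← Matrix.isUnit_iff_isUnit_det,
    ← Matrix.linearIndependent_cols_iff_isUnit]
  exact linearIndependent_equiv ((finCongr hS.symm).trans S.equivFin.symm)
    (f := fun x : S => (M.map φ).col x)

theorem mem_columnBases_of_linearIndepOn_map {K : Type*} [Field K] (φ : R →+* K)
    {M : Matrix (Fin k) (Fin n) R} {S : Finset (Fin n)} (hS : #S = k)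
    (hφS : LinearIndepOn K (M.map φ).col S) : S ∈ columnBases M :=
  ⟨hS, fun h => (map_maxMinor_ne_zero_iff_linearIndepOn φ M hS).2 hφS (by rw [h, map_zero])⟩

theorem map_maxMinor_ne_zero_of_forall_exists_isMaxOn {K : Type*} [Field K] (φ : R →+* K)
    {M : Matrix (Fin k) (Fin n) R} {key : Fin n → ℕ} (hkey : Function.Injective key)
    {J : Finset (Fin n)} (hJ : J ∈ columnBases M)
    (hJ_max : ∀ t, IsMaxOn (fun T : Finset (Fin n) => #{x ∈ T | key x < t}) (columnBases M) J)
    (hI : ∀ t, ∃ I ∈ columnBases M, φ (maxMinor M I) ≠ 0 ∧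
      IsMaxOn (fun T : Finset (Fin n) => #{x ∈ T | key x < t}) (columnBases M) I) :
    φ (maxMinor M J) ≠ 0 := by
  refine (map_maxMinor_ne_zero_iff_linearIndepOn φ M hJ.1).2
    (linearIndepOn_of_forall_exists_isMaxOn (𝓑 := columnBases M)
      (fun T hT hT_card => ?_) hkey hJ hJ_max fun t => ?_)
  · exact mem_columnBases_of_linearIndepOn_map φ (hT_card.trans (finrank_fin_fun K)) hT
  · obtain ⟨I, hI𝓑, hφI, hI_max⟩ := hI t
    exact ⟨I, hI𝓑, (map_maxMinor_ne_zero_iff_linearIndepOn φ M hI𝓑.1).1 hφI,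
      hI𝓑.1.trans (finrank_fin_fun K).symm, hI_max⟩

end Minors

section CyclicOrder

variable {n : ℕ}

theorem keyF_eq_val_sub (a x : Fin n) : keyF n a x = (x - a : Fin n) := by
  rw [keyF, Fin.val_sub]
  congr 1
  omega

theorem keyF_injective (a : Fin n) : Function.Injective (keyF n a) := by
  intro x y hxy
  rw [keyF_eq_val_sub, keyF_eq_val_sub] at hxy
  have := a.neZero
  exact sub_left_injective (Fin.val_injective hxy)

/-- The position of `x` in the reverse of the cyclic order `<ₐ`, which is the order in which the
elements of `I*ₐ` are met greedily. -/
def revKey (a x : Fin n) : ℕ := n - 1 - keyF n a x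

theorem revKey_eq_val_rev_sub (a x : Fin n) : revKey a x = (x - a).rev := by
  rw [revKey, keyF_eq_val_sub, Fin.val_rev]
  omega

theorem revKey_injective (a : Fin n) : Function.Injective (revKey a) := by
  intro x y hxy
  rw [revKey_eq_val_rev_sub, revKey_eq_val_rev_sub] at hxy
  have := a.neZero
  exact sub_left_injective (Fin.rev_injective (Fin.val_injective hxy))

theorem exists_perm_keyF_lt_iff_revKey_lt (n t : ℕ) :
    ∃ σ : Equiv.Perm (Fin n), ∀ a x, keyF n a x < t ↔ revKey (σ a) x < t := by
  obtain hn | hn := eq_zero_or_neZero n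
  · subst hn
    exact ⟨1, fun a => a.elim0⟩
  -- The first `t` elements of `<ₐ` are `a, …, a + t - 1`: the last `t` elements of `<_{a + t}`.
  refine ⟨Equiv.addRight (Fin.ofNat n t), fun a x => ?_⟩
  rw [keyF_eq_val_sub, revKey_eq_val_rev_sub, Equiv.coe_addRight, ← sub_sub, Fin.rev_sub]
  generalize x - a = u
  obtain htn | htn := le_or_gt n t
  · exact iff_of_true (u.isLt.trans_le htn) ((Fin.isLt _).trans_le htn)
  rw [Fin.val_add, Fin.val_rev, Fin.val_ofNat, Nat.mod_eq_of_lt htn]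
  obtain hut | hut := lt_or_ge u.val t
  · have hwrap : n - (u + 1) + t = (t - (u + 1)) + n := by omega
    rw [hwrap, Nat.add_mod_right, Nat.mod_eq_of_lt (by omega)]
    omega
  · rw [Nat.mod_eq_of_lt (by omega)]
    omega

theorem countP_le_countP_of_forall₂ {α β : Type*} {r : α → β → Prop} {p : α → Bool} {q : β → Bool}
    (hpq : ∀ x y, r x y → p x → q y) {l : List α} {m : List β} (h : List.Forall₂ r l m) :
    l.countP p ≤ m.countP q := by
  induction h with
  | nil => simp
  | cons hxy _ ih => grind [hpq _ _ hxy]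

theorem countP_sort_image_keyF (a : Fin n) (S : Finset (Fin n)) (p : ℕ → Prop) [DecidablePred p] :
    ((S.image (keyF n a)).sort (· ≤ ·)).countP p = #{x ∈ S | p (keyF n a x)} := by
  rw [← Multiset.coe_countP, sort_eq, Multiset.countP_eq_card_filter, ← filter_val, card_val,
    filter_image, card_image_of_injective _ (keyF_injective a)]

theorem GaleLEat.card_filter_keyF_lt_le {a : Fin n} {S T : Finset (Fin n)}
    (h : GaleLEat n a S T) (t : ℕ) : #{x ∈ T | keyF n a x < t} ≤ #{x ∈ S | keyF n a x < t} := by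
  rw [← countP_sort_image_keyF a T (· < t), ← countP_sort_image_keyF a S (· < t)]
  exact countP_le_countP_of_forall₂ (fun x y (hyx : y ≤ x) hx => by grind) h.flip

theorem GaleLEat.card_filter_revKey_lt_le {a : Fin n} {S T : Finset (Fin n)}
    (h : GaleLEat n a S T) (t : ℕ) : #{x ∈ S | revKey a x < t} ≤ #{x ∈ T | revKey a x < t} := by
  unfold revKey
  rw [← countP_sort_image_keyF a T (n - 1 - · < t), ← countP_sort_image_keyF a S (n - 1 - · < t)]
  exact countP_le_countP_of_forall₂ (fun x y hxy hx => by grind) h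

end CyclicOrder

theorem radical_span_prod_eq_radical_span_prod {R ι κ : Type*} [CommRing R] [Fintype ι] [Fintype κ]
    {f : ι → R} {g : κ → R}
    (h : ∀ P : Ideal R, P.IsPrime → ((∀ i, f i ∉ P) ↔ ∀ j, g j ∉ P)) :
    (Ideal.span {∏ i, f i}).radical = (Ideal.span {∏ j, g j}).radical := by
  rw [← PrimeSpectrum.zeroLocus_eq_iff, PrimeSpectrum.zeroLocus_span, PrimeSpectrum.zeroLocus_span]
  ext P
  simpa [Ideal.IsPrime.prod_mem_iff] using not_congr (h P.asIdeal P.isPrime)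

theorem statement9_general {R : Type*} [CommRing R] {k n : ℕ} (M : Matrix (Fin k) (Fin n) R)
    {I Istar : Fin n → Finset (Fin n)}
    (hI : ∀ a, I a ∈ columnBases M ∧ ∀ T ∈ columnBases M, GaleLEat n a (I a) T)
    (hIstar : ∀ a, Istar a ∈ columnBases M ∧ ∀ T ∈ columnBases M, GaleLEat n a T (Istar a)) :
    (Ideal.span {∏ a, maxMinor M (I a)}).radical =
      (Ideal.span {∏ a, maxMinor M (Istar a)}).radical := by
  have hI_max a t : IsMaxOn (fun T : Finset (Fin n) => #{x ∈ T | keyF n a x < t})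
      (columnBases M) (I a) :=
    fun T hT => ((hI a).2 T hT).card_filter_keyF_lt_le t
  have hIstar_max a t : IsMaxOn (fun T : Finset (Fin n) => #{x ∈ T | revKey a x < t})
      (columnBases M) (Istar a) :=
    fun T hT => ((hIstar a).2 T hT).card_filter_revKey_lt_le t
  refine radical_span_prod_eq_radical_span_prod fun P _ => ?_
  simp only [← Ideal.algebraMap_residueField_eq_zero]
  refine ⟨fun hP b => ?_, fun hP a => ?_⟩
  · refine map_maxMinor_ne_zero_of_forall_exists_isMaxOn _ (revKey_injective b) (hIstar b).1
      (hIstar_max b) fun t => ?_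
    obtain ⟨σ, hσ⟩ := exists_perm_keyF_lt_iff_revKey_lt n t
    refine ⟨I (σ.symm b), (hI _).1, hP _, ?_⟩
    simpa only [hσ, σ.apply_symm_apply] using hI_max (σ.symm b) t
  · refine map_maxMinor_ne_zero_of_forall_exists_isMaxOn _ (keyF_injective a) (hI a).1
      (hI_max a) fun t => ?_
    obtain ⟨σ, hσ⟩ := exists_perm_keyF_lt_iff_revKey_lt n t
    refine ⟨Istar (σ a), (hIstar _).1, hP _, ?_⟩
    simpa only [hσ] using hIstar_max (σ a) t

/-- if `M(V)` is a positroid of rank `k` and `M_V` is a minimal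
representation of it, then the radical of the ideal generated by the product of the
Grassmann necklace minors equals the radical of the ideal generated by the product of
the reverse Grassmann necklace minors. -/
theorem statement9 (k n : ℕ) (V : Fin k → Finset (Fin n))
    (hpos : IsPositroidRep k n V)
    (hmin : ∀ T : Finset (Fin k), T.Nonempty →
      (T.sup fun i => (V i).card) + T.card ≤ (T.biUnion V).card + 1)
    (I Istar : Fin n → Finset (Fin n))
    (hI : ∀ a : Fin n, NecklaceAt k n V a (I a))
    (hIstar : ∀ a : Fin n, CoNecklaceAt k n V a (Istar a)) :
    (Ideal.span {∏ a : Fin n, minorF k n V (I a)}).radical =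
      (Ideal.span {∏ a : Fin n, minorF k n V (Istar a)}).radical :=
  statement9_general (MVpoly k n V) hI hIstar
end

section
/- Let V = (V_1,…,V_k) be subsets of {1,…,n} such that the column matroid M(V) of M_V is a positroid of rank k. Then the following are equivalent: (a) ∑_{i=1}^{k} |V_i| ≤ ∑_{i=1}^{k} |V'_i| for every tuple V' = (V'_1,…,V'_k) of subsets of {1,…,n} whose column matroid M(V') equals M(V) (i.e., M_V has the smallest number of nonzero variable entries among all variable-valued matrices representing the same positroid); (b) for every nonempty T ⊆ {1,…,k}: |∪_{i∈T} V_i| ≥ max_{i∈T}|V_i| + |T| − 1. -/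
open MvPolynomial

/-!
In the transversal matroid `M` presented by `V`, a cyclic set meets exactly as many members of `V`
as its rank. Hence for every cyclic set `X` the number of complements `(V i)ᶜ` containing `X`
depends only on `M`, and by descending induction on `X` so does the multiset of largest cyclic
subsets of these complements. A set exceeds its largest cyclic subset only by coloops, which raise
rank and cardinality alike; therefore `∑ i, |V i| + ∑ i, rk (V i)ᶜ` also depends only on `M`.

Let `k` be the number of members. The member `V i` misses its own complement, so
`rk (V i)ᶜ ≤ k - 1`, and a presentation for which all these bounds are equalities is minimal. By the
rank formula coming from Hall's theorem, these equalities are the inequalities on unions of members.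
Conversely, an element `e` of `V i` can be deleted from `V i` without changing `M` unless, in the
matroid presented by the other members, `(V i)ᶜ` spans `e`. In a minimal presentation of a matroid
of rank `k` the complement `(V i)ᶜ` therefore spans the matroid of the other members, whose rank is
at least `k - 1`.
-/

section LinearAlgebra

variable {α K W : Type*} [Field K] [AddCommGroup W] [Module K W]

lemma ncard_eq_finrank_span_image {v : α → W} {I : Set α} (hI : I.Finite)
    (hv : LinearIndepOn K v I) : I.ncard = Module.finrank K (Submodule.span K (v '' I)) := by
  have := hI.fintype
  rw [← Set.range_domRestrict, finrank_span_eq_card (b := I.domRestrict v) hv,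
    ← Nat.card_eq_fintype_card, Nat.card_coe_set_eq]

lemma exists_linearIndepOn_insert_of_ncard_lt [Finite α] {v : α → W} {I J : Set α}
    (hI : LinearIndepOn K v I) (hJ : LinearIndepOn K v J) (hIJ : I.ncard < J.ncard) :
    ∃ e ∈ J, e ∉ I ∧ LinearIndepOn K v (insert e I) := by
  by_contra! h
  have hspan : v '' J ⊆ Submodule.span K (v '' I) := by
    rintro _ ⟨e, heJ, rfl⟩
    by_contra he
    exact h e heJ (fun heI => he (Submodule.subset_span ⟨e, heI, rfl⟩)) (hI.insert he)
  have : Module.Finite K (Submodule.span K (v '' I)) :=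
    Module.Finite.span_of_finite K (I.toFinite.image v)
  have hle := Submodule.finrank_mono (Submodule.span_le.2 hspan)
  rw [← ncard_eq_finrank_span_image I.toFinite hI,
    ← ncard_eq_finrank_span_image J.toFinite hJ] at hle
  omega

end LinearAlgebra

section ColumnRank

variable {ι κ α K L : Type*} [Fintype α] [Field K] [Field L]

lemma exists_linearIndepOn_col_card_eq_rank (A : Matrix ι α K) :
    ∃ S : Finset α, LinearIndepOn K A.col S ∧ S.card = A.rank := by
  classical
  obtain ⟨B, -, -, hspan, hB⟩ :=
    exists_linearIndepOn_extension (linearIndepOn_empty K A.col) (Set.empty_subset Set.univ)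
  have hspan_eq : Submodule.span K (A.col '' B) = Submodule.span K (Set.range A.col) := by
    rw [← Set.image_univ]
    exact le_antisymm (Submodule.span_mono (Set.image_mono B.subset_univ))
      (Submodule.span_le.2 hspan)
  refine ⟨B.toFinset, by simpa using hB, ?_⟩
  rw [A.rank_eq_finrank_span_cols, ← hspan_eq, ← ncard_eq_finrank_span_image B.toFinite hB,
    Set.ncard_eq_toFinset_card']

lemma card_le_rank_of_linearIndepOn_col [Finite ι] {A : Matrix ι α K} {S : Finset α}
    (hS : LinearIndepOn K A.col S) : S.card ≤ A.rank := by
  rw [← Set.ncard_coe_finset, ncard_eq_finrank_span_image S.finite_toSet hS,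
    A.rank_eq_finrank_span_cols]
  exact Submodule.finrank_mono (Submodule.span_mono (Set.image_subset_range _ _))

lemma rank_eq_of_linearIndepOn_col_iff [Finite ι] [Finite κ] {A : Matrix ι α K} {B : Matrix κ α L}
    (h : ∀ S : Finset α, LinearIndepOn K A.col S ↔ LinearIndepOn L B.col S) :
    A.rank = B.rank := by
  obtain ⟨S, hS, hSA⟩ := exists_linearIndepOn_col_card_eq_rank A
  obtain ⟨T, hT, hTB⟩ := exists_linearIndepOn_col_card_eq_rank B
  apply le_antisymm
  · exact hSA.symm.le.trans (card_le_rank_of_linearIndepOn_col ((h S).1 hS))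
  · exact hTB.symm.le.trans (card_le_rank_of_linearIndepOn_col ((h T).2 hT))

end ColumnRank

section MultisetOrder

variable {β : Type*} [PartialOrder β] [DecidableLE β]

lemma multiset_eq_of_countP_le_eq {s t : Multiset β}
    (h : ∀ x ∈ s + t, s.countP (x ≤ ·) = t.countP (x ≤ ·)) : s = t := by
  classical
  induction hn : Multiset.card s using Nat.strong_induction_on generalizing s t with
  | _ n ih =>
    by_cases hst : s + t = 0
    · simp_all
    -- A maximal element is counted by its own multiplicity alone, so it can be removed from both.
    obtain ⟨x, hx⟩ := (s + t).toFinset.exists_maximal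
      (by simpa [Finset.nonempty_iff_ne_empty] using hst)
    have hxst : x ∈ s + t := Multiset.mem_toFinset.1 hx.prop
    have hcount : ∀ u ≤ s + t, u.countP (x ≤ ·) = u.count x := fun u hu =>
      Multiset.countP_congr rfl fun y hy => propext
        ⟨hx.eq_of_le (Multiset.mem_toFinset.2 (Multiset.mem_of_le hu hy)), fun hxy => hxy.le⟩
    have hcount_eq : s.count x = t.count x := by
      rw [← hcount s (Multiset.le_add_right s t), ← hcount t (Multiset.le_add_left t s), h x hxst]
    have hpos : 0 < (s + t).count x := Multiset.count_pos.2 hxst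
    rw [Multiset.count_add] at hpos
    obtain ⟨s, rfl⟩ := Multiset.exists_cons_of_mem (Multiset.count_pos.1 (by omega : 0 < s.count x))
    obtain ⟨t, rfl⟩ := Multiset.exists_cons_of_mem (Multiset.count_pos.1 (by omega : 0 < t.count x))
    rw [ih s.card (by simp [← hn]) (fun y hy => ?_) rfl]
    have := h y (by simp only [Multiset.mem_add, Multiset.mem_cons] at hy ⊢; tauto)
    simpa [Multiset.countP_cons] using this

end MultisetOrder

section CyclicSets

variable {α : Type*} {M : Matroid α} {X Y I : Finset α}

/-- The rank of a finite set in a matroid, as a natural number. -/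
noncomputable def rk (M : Matroid α) (X : Finset α) : ℕ :=
  (M.eRk X).toNat

lemma coe_rk (M : Matroid α) (X : Finset α) : (rk M X : ℕ∞) = M.eRk X :=
  ENat.natCast_toNat ((M.eRk_le_encard X).trans_lt X.finite_toSet.encard_lt_top).ne

lemma card_le_rk_of_indep (hI : M.Indep I) (hIX : I ⊆ X) : I.card ≤ rk M X := by
  have := hI.encard_le_eRk_of_subset (Finset.coe_subset.2 hIX)
  rwa [← coe_rk, Set.encard_coe_eq_coe_finsetCard, Nat.cast_le] at this

lemma card_eq_rk_of_isBasis' (hI : M.IsBasis' I X) : I.card = rk M X := by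
  rw [← Nat.cast_inj (R := ℕ∞), coe_rk, ← Set.encard_coe_eq_coe_finsetCard, hI.encard_eq_eRk]

lemma exists_indep_card_eq_rk (M : Matroid α) (X : Finset α) :
    ∃ I ⊆ X, M.Indep I ∧ I.card = rk M X := by
  obtain ⟨I, hI⟩ := M.exists_isBasis' X
  lift I to Finset α using X.finite_toSet.subset hI.subset
  exact ⟨I, Finset.coe_subset.1 hI.subset, hI.indep, card_eq_rk_of_isBasis' hI⟩

lemma rk_eq_of_closure_eq (h : M.closure X = M.closure Y) : rk M X = rk M Y := by
  rw [rk, ← M.eRk_closure_eq, h, M.eRk_closure_eq, rk]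

/-- A set is cyclic if it is a union of circuits, that is, if each of its elements is spanned by the
others. -/
def IsCyclicSet (M : Matroid α) (X : Finset α) : Prop :=
  ∀ e ∈ X, e ∈ M.closure (X \ {e})

open Classical in
/-- The largest cyclic subset of `X`: the elements of `X` which are not coloops of `M ↾ X`. -/
noncomputable def cyclicCore (M : Matroid α) (X : Finset α) : Finset α :=
  {e ∈ X | e ∈ M.closure (X \ {e})}

lemma mem_cyclicCore {e : α} :
    e ∈ cyclicCore M X ↔ e ∈ X ∧ e ∈ M.closure (X \ {e}) := by
  simp only [cyclicCore, Finset.mem_filter]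

lemma cyclicCore_subset : cyclicCore M X ⊆ X :=
  fun _ he => (mem_cyclicCore.1 he).1

lemma subset_cyclicCore_of_isCircuit {C : Set α} (hC : M.IsCircuit C) (hCX : C ⊆ X) :
    C ⊆ cyclicCore M X := fun _ he => Finset.mem_coe.2 <| mem_cyclicCore.2
  ⟨hCX he, M.closure_subset_closure (Set.sdiff_subset_sdiff_left hCX)
    (hC.mem_closure_sdiff_singleton_of_mem he)⟩

lemma isCyclicSet_cyclicCore : IsCyclicSet M (cyclicCore M X) := by
  intro e he
  obtain ⟨heX, hecl⟩ := mem_cyclicCore.1 he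
  obtain ⟨C, hCX, hC, heC⟩ := M.exists_isCircuit_of_mem_closure hecl (by simp)
  rw [Set.insert_sdiff_singleton, Set.insert_eq_of_mem (Finset.mem_coe.2 heX)] at hCX
  exact M.closure_subset_closure
    (Set.sdiff_subset_sdiff_left (subset_cyclicCore_of_isCircuit hC hCX))
    (hC.mem_closure_sdiff_singleton_of_mem heC)

lemma IsCyclicSet.subset_cyclicCore (hX : IsCyclicSet M X) (hXY : X ⊆ Y) :
    X ⊆ cyclicCore M Y := fun e he => mem_cyclicCore.2
  ⟨hXY he, M.closure_subset_closure
    (Set.sdiff_subset_sdiff_left (Finset.coe_subset.2 hXY)) (hX e he)⟩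

lemma IsCyclicSet.subset_cyclicCore_iff (hX : IsCyclicSet M X) :
    X ⊆ cyclicCore M Y ↔ X ⊆ Y :=
  ⟨fun h => h.trans cyclicCore_subset, hX.subset_cyclicCore⟩

lemma IsCyclicSet.rk_erase [DecidableEq α] (hX : IsCyclicSet M X) {e : α} (he : e ∈ X) :
    rk M (X.erase e) = rk M X := by
  apply rk_eq_of_closure_eq
  have := M.closure_insert_eq_of_mem_closure (hX e he)
  rwa [Set.insert_sdiff_singleton, Set.insert_eq_of_mem (Finset.mem_coe.2 he), eq_comm,
    ← Finset.coe_erase] at this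

/-- A basis of `X` contains every element of `X` outside the core, and adjoining those elements to
an independent subset of the core creates no circuit. -/
lemma rk_cyclicCore_add_card_sdiff [DecidableEq α] (hX : (X : Set α) ⊆ M.E) :
    rk M (cyclicCore M X) + (X \ cyclicCore M X).card = rk M X := by
  apply le_antisymm
  · obtain ⟨J, hJ, hJi, hJc⟩ := exists_indep_card_eq_rk M (cyclicCore M X)
    have hunion : J ∪ (X \ cyclicCore M X) ⊆ X :=
      Finset.union_subset (hJ.trans cyclicCore_subset) Finset.sdiff_subset
    have hindep : M.Indep (J ∪ (X \ cyclicCore M X) : Finset α) := by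
      rw [Matroid.indep_iff_forall_subset_not_isCircuit ((Finset.coe_subset.2 hunion).trans hX)]
      intro C hCJ hC
      have hCcore := subset_cyclicCore_of_isCircuit hC (hCJ.trans (Finset.coe_subset.2 hunion))
      refine hC.not_indep (hJi.subset fun e he => ?_)
      have heunion := hCJ he
      have hecore := hCcore he
      simp only [Finset.coe_union, Finset.coe_sdiff, Set.mem_union, Set.mem_sdiff] at heunion
      tauto
    rw [← hJc, ← Finset.card_union_of_disjoint (Finset.disjoint_sdiff.mono_left hJ)]
    exact card_le_rk_of_indep hindep hunion
  · obtain ⟨I, hI⟩ := M.exists_isBasis (X : Set α)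
    lift I to Finset α using X.finite_toSet.subset hI.subset
    have hIX : I ⊆ X := Finset.coe_subset.1 hI.subset
    have hcoloops : X \ cyclicCore M X ⊆ I := by
      intro e he
      obtain ⟨heX, hecore⟩ := Finset.mem_sdiff.1 he
      by_contra heI
      have hIe : (I : Set α) ⊆ X \ {e} := Set.subset_sdiff_singleton hI.subset heI
      exact hecore (mem_cyclicCore.2 ⟨heX, M.closure_subset_closure hIe (hI.subset_closure heX)⟩)
    have hcore : (I \ (X \ cyclicCore M X)).card ≤ rk M (cyclicCore M X) := by
      refine card_le_rk_of_indep (hI.indep.subset (Finset.coe_subset.2 Finset.sdiff_subset)) ?_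
      intro e he
      have heX := @hIX e
      simp only [Finset.mem_sdiff] at he
      tauto
    rw [← card_eq_rk_of_isBasis' hI.isBasis', ← Finset.card_sdiff_add_card_eq_card hcoloops]
    gcongr

lemma exists_indep_insert_sdiff_singleton {J Z : Set α} {e : α} (hJ : M.Indep J) (heE : e ∈ M.E)
    (hdep : ¬M.Indep (insert e J)) (heZ : e ∉ M.closure Z) :
    ∃ f ∈ J, f ∉ Z ∧ M.Indep (insert e J \ {f}) := by
  have heJ : e ∉ J := fun heJ => hdep (by rwa [Set.insert_eq_of_mem heJ])
  have hecl : e ∈ M.closure J := by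
    by_contra hecl
    exact hdep ((hJ.notMem_closure_iff heE).1 hecl).1
  have hC := hJ.fundCircuit_isCircuit hecl heJ
  have hCe : ¬M.fundCircuit e J \ {e} ⊆ Z := fun hsub =>
    heZ (M.closure_subset_closure hsub
      (hC.mem_closure_sdiff_singleton_of_mem (M.mem_fundCircuit e J)))
  obtain ⟨f, ⟨hfC, hfe⟩, hfZ⟩ := Set.not_subset.1 hCe
  exact ⟨f, (M.fundCircuit_subset_insert e J hfC).resolve_left hfe, hfZ,
    (hJ.mem_fundCircuit_iff hecl heJ).1 hfC⟩

end CyclicSets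

section PartialTransversals

variable {ι α : Type*} {V W : ι → Finset α}

/-- A partial transversal of the set family `V`: a set which can be matched into the index type so
that every element lies in the member it is matched with. -/
def IsPartialTransversal (V : ι → Finset α) (I : Set α) : Prop :=
  ∃ f : I → ι, f.Injective ∧ ∀ x : I, (x : α) ∈ V (f x)

lemma isPartialTransversal_empty : IsPartialTransversal V ∅ :=
  ⟨isEmptyElim, Function.injective_of_subsingleton _, isEmptyElim⟩

lemma IsPartialTransversal.subset {I J : Set α} (hJ : IsPartialTransversal V J) (hIJ : I ⊆ J) :
    IsPartialTransversal V I := by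
  obtain ⟨f, hf, hfV⟩ := hJ
  exact ⟨f ∘ Set.inclusion hIJ, hf.comp (Set.inclusion_injective hIJ), fun x => hfV _⟩

lemma IsPartialTransversal.mono {I : Set α} (hI : IsPartialTransversal V I) (hVW : V ≤ W) :
    IsPartialTransversal W I := by
  obtain ⟨f, hf, hfV⟩ := hI
  exact ⟨f, hf, fun x => hVW _ (hfV x)⟩

lemma isPartialTransversal_iff_update_empty [DecidableEq ι] (V : ι → Finset α) (i : ι)
    (I : Set α) :
    IsPartialTransversal V I ↔ IsPartialTransversal (Function.update V i ∅) I ∨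
      ∃ e ∈ I, e ∈ V i ∧ IsPartialTransversal (Function.update V i ∅) (I \ {e}) := by
  constructor
  · rintro ⟨f, hf, hfV⟩
    by_cases hi : ∃ e, f e = i
    · obtain ⟨e, rfl⟩ := hi
      refine .inr ⟨e, e.2, hfV e, fun x => f ⟨x, x.2.1⟩, fun x y hxy => ?_, fun x => ?_⟩
      · simpa [Subtype.ext_iff] using hf hxy
      · rw [Function.update_of_ne (fun h => x.2.2 (by simpa using congrArg Subtype.val (hf h)))]
        exact hfV _
    · push Not at hi
      exact .inl ⟨f, hf, fun x => by rw [Function.update_of_ne (hi x)]; exact hfV x⟩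
  · rintro (hI | ⟨e, -, heV, f, hf, hfV⟩)
    · exact hI.mono (update_le_self_iff.2 (Finset.empty_subset _))
    · have hfi : ∀ x, f x ≠ i := fun x hx => by simpa [hx] using hfV x
      classical
      refine ⟨fun x => if h : (x : α) = e then i else f ⟨x, x.2, h⟩, fun x y hxy => ?_, fun x => ?_⟩
      · by_cases hx : (x : α) = e <;> by_cases hy : (y : α) = e
        · exact Subtype.ext (hx.trans hy.symm)
        · exact absurd (by simpa [hx, hy] using hxy.symm) (hfi _)
        · exact absurd (by simpa [hx, hy] using hxy) (hfi _)
        · simpa [Subtype.ext_iff] using hf (by simpa [hx, hy] using hxy)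
      · by_cases hx : (x : α) = e
        · simpa [hx] using heV
        · simpa [hx, Function.update_of_ne (hfi _)] using hfV ⟨x, x.2, hx⟩

lemma IsPartialTransversal.exists_subset_of_sumElim {κ : Type*} [Fintype κ] {U : κ → Finset α}
    {X : Finset α} (hX : IsPartialTransversal (Sum.elim V U) X) :
    ∃ I ⊆ X, IsPartialTransversal V I ∧ X.card ≤ I.card + Fintype.card κ := by
  classical
  obtain ⟨f, hf, hfV⟩ := hX
  let I : Finset X := {x | (f x).isLeft}
  refine ⟨I.map (.subtype _), Finset.map_subtype_subset I, ?_, ?_⟩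
  · have hleft : ∀ y : (I.map (.subtype _) : Set α), ∃ i, ∃ x : X, x.1 = y ∧ f x = .inl i := by
      rintro ⟨y, hy⟩
      obtain ⟨x, hx, rfl⟩ := Finset.mem_map.1 hy
      obtain ⟨i, hi⟩ := Sum.isLeft_iff.1 (Finset.mem_filter.1 hx).2
      exact ⟨i, x, rfl, hi⟩
    choose g x hxy hfg using hleft
    refine ⟨g, fun y z hyz => Subtype.ext ?_, fun y => ?_⟩
    · rw [← hxy, ← hxy, hf ((hfg y).trans (hyz ▸ (hfg z).symm))]
    · simpa [hfg, hxy] using hfV (x y)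
  · have hright : (Finset.univ \ I).map ⟨f, hf⟩ ⊆ Finset.univ.map .inr := by
      intro j hj
      obtain ⟨x, hx, rfl⟩ := Finset.mem_map.1 hj
      cases hfx : f x <;> simp_all [I]
    have hcard := Finset.card_sdiff_add_card_eq_card I.subset_univ
    have hright := Finset.card_le_card hright
    simp only [Finset.card_map, Finset.card_univ, Fintype.card_coe] at hcard hright ⊢
    omega

variable [Fintype ι] [DecidableEq α]

/-- The indices of the members of the set family `V` which meet the set `Y`. -/
def meetingIndices (V : ι → Finset α) (Y : Finset α) : Finset ι :=
  {i | ∃ e ∈ Y, e ∈ V i}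

lemma mem_meetingIndices {Y : Finset α} {i : ι} :
    i ∈ meetingIndices V Y ↔ ∃ e ∈ Y, e ∈ V i := by
  simp only [meetingIndices, Finset.mem_filter, Finset.mem_univ, true_and]

lemma meetingIndices_mono {X Y : Finset α} (hXY : X ⊆ Y) :
    meetingIndices V X ⊆ meetingIndices V Y := by
  intro i hi
  obtain ⟨e, he, heV⟩ := mem_meetingIndices.1 hi
  exact mem_meetingIndices.2 ⟨e, hXY he, heV⟩

lemma IsPartialTransversal.card_le_card_meetingIndices {I : Finset α}
    (hI : IsPartialTransversal V I) : I.card ≤ (meetingIndices V I).card := by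
  obtain ⟨f, hf, hfV⟩ := hI
  have hfI : ∀ x : I, f x ∈ meetingIndices V I := fun x => mem_meetingIndices.2 ⟨x, x.2, hfV x⟩
  simpa using Fintype.card_le_of_injective (fun x : I => (⟨f x, hfI x⟩ : meetingIndices V I))
    fun x y hxy => hf (congrArg Subtype.val hxy)

lemma isPartialTransversal_iff_card_le {X : Finset α} :
    IsPartialTransversal V X ↔ ∀ Y ⊆ X, Y.card ≤ (meetingIndices V Y).card := by
  classical
  refine ⟨fun hX Y hY => (hX.subset (Finset.coe_subset.2 hY)).card_le_card_meetingIndices,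
    fun h => ?_⟩
  let T : X → Finset ι := fun x => {i | (x : α) ∈ V i}
  have hT : ∀ s : Finset X, s.biUnion T = meetingIndices V (s.map (.subtype _)) := by
    intro s
    ext i
    simp [T, mem_meetingIndices]
  obtain ⟨f, hf, hfT⟩ := (Finset.all_card_le_biUnion_card_iff_exists_injective T).1 fun s => by
    simpa [hT] using h (s.map (.subtype _)) (Finset.map_subtype_subset s)
  exact ⟨f, hf, fun x => (Finset.mem_filter.1 (hfT x)).2⟩

/-- Apply Hall's theorem after adjoining `d` copies of `X` to the family. -/
lemma exists_isPartialTransversal_card_le_add {X : Finset α} {d : ℕ}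
    (h : ∀ Y ⊆ X, Y.card ≤ (meetingIndices V Y).card + d) :
    ∃ I ⊆ X, IsPartialTransversal V I ∧ X.card ≤ I.card + d := by
  have hX : IsPartialTransversal (Sum.elim V fun _ : Fin d => X) X := by
    refine isPartialTransversal_iff_card_le.2 fun Y hY => ?_
    rcases Y.eq_empty_or_nonempty with rfl | ⟨e, he⟩
    · simp
    have hsub : (meetingIndices V Y).disjSum (Finset.univ : Finset (Fin d)) ⊆
        meetingIndices (Sum.elim V fun _ => X) Y := by
      rintro (i | j) hij
      · simpa [mem_meetingIndices] using hij
      · exact mem_meetingIndices.2 ⟨e, he, hY he⟩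
    calc Y.card ≤ (meetingIndices V Y).card + d := h Y hY
      _ = _ := by rw [Finset.card_disjSum, Finset.card_fin]
      _ ≤ _ := Finset.card_le_card hsub
  simpa using hX.exists_subset_of_sumElim

end PartialTransversals

section GenericMatrix

variable {ι α : Type*} [DecidableEq α]

/-- The matrix of independent variables supported on the set family `V`: the entry at `(i, j)` is
the variable `X (i, j)` if `j ∈ V i`, and `0` otherwise. -/
noncomputable def genericMatrix (R : Type*) [CommRing R] (V : ι → Finset α) :
    Matrix ι α (FractionRing (MvPolynomial (ι × α) R)) :=
  Matrix.of fun i j => algebraMap (MvPolynomial (ι × α) R) _ (if j ∈ V i then X (i, j) else 0)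

lemma card_le_card_meetingIndices_of_linearIndepOn_col [Fintype ι] {K : Type*} [Field K]
    {V : ι → Finset α} {A : Matrix ι α K} (hA : ∀ i j, j ∉ V i → A i j = 0) {Y : Finset α}
    (hY : LinearIndepOn K A.col Y) : Y.card ≤ (meetingIndices V Y).card := by
  have hrestrict : LinearIndependent K fun (j : Y) (i : meetingIndices V Y) => A i j := by
    refine Fintype.linearIndependent_iff.2 fun g hg => Fintype.linearIndependent_iff.1 hY g ?_
    ext i
    by_cases hi : i ∈ meetingIndices V Y
    · simpa using congrFun hg ⟨i, hi⟩
    · have hzero : ∀ j : Y, A i j = 0 := fun j =>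
        hA i j fun hj => hi (mem_meetingIndices.2 ⟨j, j.2, hj⟩)
      simp [hzero]
  simpa using hrestrict.fintype_card_le_finrank

variable {R : Type*} [CommRing R] [IsDomain R] {V : ι → Finset α}

/-- Specializing the variables to the 0/1 matrix of the matching turns the minor of the matched rows
into `1`. -/
lemma IsPartialTransversal.linearIndepOn_col_genericMatrix {I : Finset α}
    (hI : IsPartialTransversal V I) :
    LinearIndepOn (FractionRing (MvPolynomial (ι × α) R)) (genericMatrix R V).col I := by
  classical
  obtain ⟨f, hf, hfV⟩ := hI
  let N : Matrix I I (MvPolynomial (ι × α) R) :=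
    Matrix.of fun x y => if (y : α) ∈ V (f x) then X (f x, y) else 0
  have hN : (eval fun p =>
      if ∃ x : I, f x = p.1 ∧ (x : α) = p.2 then (1 : R) else 0).mapMatrix N = 1 := by
    ext x y
    rcases eq_or_ne x y with rfl | hxy
    · simp [N, hfV]
    · have hvar : ¬∃ z : I, f z = f x ∧ (z : α) = y := fun ⟨z, hzx, hzy⟩ =>
        hxy ((hf hzx).symm.trans (Subtype.ext hzy))
      simp only [N, RingHom.mapMatrix_apply, Matrix.map_apply, Matrix.of_apply,
        Matrix.one_apply_ne hxy]
      split_ifs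
      · rw [eval_X, if_neg hvar]
      · exact map_zero _
  have hdet : N.det ≠ 0 := by
    intro h
    have := congrArg Matrix.det hN
    rw [← RingHom.map_det, h, map_zero, Matrix.det_one] at this
    exact zero_ne_one this
  have hdet' : ((genericMatrix R V).submatrix f ((↑) : I → α)).det ≠ 0 := by
    have hmap : (genericMatrix R V).submatrix f ((↑) : I → α) = (algebraMap _ _).mapMatrix N := rfl
    rwa [hmap, ← RingHom.map_det, map_ne_zero_iff _ (IsFractionRing.injective _ _)]
  have := Matrix.linearIndependent_cols_of_det_ne_zero hdet'
  exact LinearIndependent.of_comp (v := fun x : I => (genericMatrix R V).col x)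
    (LinearMap.funLeft _ _ f) this

lemma linearIndepOn_col_genericMatrix_iff [Finite ι] {I : Finset α} :
    LinearIndepOn (FractionRing (MvPolynomial (ι × α) R)) (genericMatrix R V).col I ↔
      IsPartialTransversal V I := by
  have := Fintype.ofFinite ι
  refine ⟨fun hI => isPartialTransversal_iff_card_le.2 fun Y hYI => ?_,
    fun hI => hI.linearIndepOn_col_genericMatrix⟩
  refine card_le_card_meetingIndices_of_linearIndepOn_col (fun i j hij => ?_)
    (hI.mono (Finset.coe_subset.2 hYI))
  simp [genericMatrix, hij]

end GenericMatrix

section TransversalMatroids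

variable {ι α : Type*} [Finite ι] [Finite α]

lemma IsPartialTransversal.exists_insert {V : ι → Finset α} {I J : Set α}
    (hI : IsPartialTransversal V I) (hJ : IsPartialTransversal V J) (hIJ : I.ncard < J.ncard) :
    ∃ e ∈ J, e ∉ I ∧ IsPartialTransversal V (insert e I) := by
  classical
  have hiff : ∀ S : Set α, IsPartialTransversal V S ↔
      LinearIndepOn (FractionRing (MvPolynomial (ι × α) ℚ)) (genericMatrix ℚ V).col S := by
    intro S
    lift S to Finset α using S.toFinite
    exact linearIndepOn_col_genericMatrix_iff.symm
  simp only [hiff] at hI hJ ⊢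
  exact exists_linearIndepOn_insert_of_ncard_lt hI hJ hIJ

/-- The transversal matroid presented by the set family `V`: its independent sets are the partial
transversals of `V`. -/
def transversalMatroid (V : ι → Finset α) : Matroid α :=
  (IndepMatroid.ofFinite Set.finite_univ (IsPartialTransversal V) isPartialTransversal_empty
    (fun _ _ hJ hIJ => hJ.subset hIJ) (fun _ _ hI hJ hIJ => hI.exists_insert hJ hIJ)
    (fun _ _ => Set.subset_univ _)).matroid

@[simp]
lemma transversalMatroid_ground (V : ι → Finset α) : (transversalMatroid V).E = Set.univ :=
  rfl

@[simp]
lemma transversalMatroid_indep {V : ι → Finset α} {I : Set α} :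
    (transversalMatroid V).Indep I ↔ IsPartialTransversal V I := by
  simp [transversalMatroid]

lemma transversalMatroid_eq_iff {V W : ι → Finset α} :
    transversalMatroid V = transversalMatroid W ↔
      ∀ I : Finset α, IsPartialTransversal V I ↔ IsPartialTransversal W I := by
  refine ⟨fun h I => ?_, fun h => Matroid.ext_indep rfl fun I _ => ?_⟩
  · rw [← transversalMatroid_indep, h, transversalMatroid_indep]
  · lift I to Finset α using I.toFinite
    exact transversalMatroid_indep.trans ((h I).trans transversalMatroid_indep.symm)

lemma rk_transversalMatroid_mono {V W : ι → Finset α} (h : V ≤ W) (X : Finset α) :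
    rk (transversalMatroid V) X ≤ rk (transversalMatroid W) X := by
  obtain ⟨I, hIX, hI, hcard⟩ := exists_indep_card_eq_rk (transversalMatroid V) X
  rw [← hcard]
  exact card_le_rk_of_indep
    (transversalMatroid_indep.2 ((transversalMatroid_indep.1 hI).mono h)) hIX

lemma rk_transversalMatroid_le_update_empty [DecidableEq ι] (V : ι → Finset α) (i : ι)
    (X : Finset α) :
    rk (transversalMatroid V) X ≤ rk (transversalMatroid (Function.update V i ∅)) X + 1 := by
  classical
  obtain ⟨I, hIX, hI, hcard⟩ := exists_indep_card_eq_rk (transversalMatroid V) X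
  rw [← hcard]
  rcases (isPartialTransversal_iff_update_empty V i I).1 (transversalMatroid_indep.1 hI) with
    hI | ⟨e, he, -, hI⟩
  · exact (card_le_rk_of_indep (transversalMatroid_indep.2 hI) hIX).trans (Nat.le_succ _)
  · rw [← Finset.coe_erase] at hI
    rw [← Finset.card_erase_add_one he]
    exact Nat.add_le_add_right (card_le_rk_of_indep (transversalMatroid_indep.2 hI)
      ((Finset.erase_subset e I).trans hIX)) 1

lemma transversalMatroid_update_erase [DecidableEq ι] [DecidableEq α]
    {V : ι → Finset α} {i : ι} {e : α}
    (he : e ∉ (transversalMatroid (Function.update V i ∅)).closure (V i)ᶜ) :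
    transversalMatroid (Function.update V i ((V i).erase e)) = transversalMatroid V := by
  refine transversalMatroid_eq_iff.2 fun I =>
    ⟨fun hI => hI.mono (update_le_self_iff.2 (Finset.erase_subset _ _)), fun hI => ?_⟩
  have herase := isPartialTransversal_iff_update_empty (Function.update V i ((V i).erase e)) i I
  simp only [Function.update_idem, Function.update_self, Finset.mem_erase] at herase
  by_cases hIW : IsPartialTransversal (Function.update V i ∅) I
  · exact herase.2 (.inl hIW)
  obtain ⟨g, hgI, hgV, hg⟩ :=
    ((isPartialTransversal_iff_update_empty V i I).1 hI).resolve_left hIW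
  rcases ne_or_eq g e with hge | rfl
  · exact herase.2 (.inr ⟨g, hgI, ⟨hge, hgV⟩, hg⟩)
  obtain ⟨f, hf, hfV, hfI⟩ := exists_indep_insert_sdiff_singleton
    (transversalMatroid_indep.2 hg) (Set.mem_univ g)
    (by rwa [Set.insert_sdiff_singleton, Set.insert_eq_of_mem hgI, transversalMatroid_indep]) he
  rw [Set.insert_sdiff_singleton, Set.insert_eq_of_mem hgI, transversalMatroid_indep] at hfI
  exact herase.2 (.inr ⟨f, hf.1, ⟨hf.2, Set.notMem_compl_iff.1 hfV⟩, hfI⟩)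

end TransversalMatroids

section RankFormula

variable {ι α : Type*} [Fintype ι] [DecidableEq α] {V V' : ι → Finset α} {X : Finset α}

section Finite

variable [Finite α]

lemma rk_transversalMatroid_le (V : ι → Finset α) (X Y : Finset α) :
    rk (transversalMatroid V) X ≤ (meetingIndices V Y).card + (X \ Y).card := by
  obtain ⟨I, hIX, hI, hcard⟩ := exists_indep_card_eq_rk (transversalMatroid V) X
  have hIY : (I ∩ Y).card ≤ (meetingIndices V Y).card :=
    ((transversalMatroid_indep.1 hI).subset (Finset.coe_subset.2
      Finset.inter_subset_left)).card_le_card_meetingIndices.trans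
      (Finset.card_le_card (meetingIndices_mono Finset.inter_subset_right))
  rw [← hcard, ← Finset.card_inter_add_card_sdiff I Y]
  gcongr

lemma exists_card_meetingIndices_add_card_sdiff_le_rk (V : ι → Finset α) (X : Finset α) :
    ∃ Y ⊆ X, (meetingIndices V Y).card + (X \ Y).card ≤ rk (transversalMatroid V) X := by
  by_contra! h
  obtain ⟨I, hIX, hI, hcard⟩ := exists_isPartialTransversal_card_le_add
    (V := V) (X := X) (d := X.card - (rk (transversalMatroid V) X + 1)) fun Y hY => by
      have := h Y hY
      have := Finset.card_sdiff_add_card_eq_card hY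
      omega
  have hrk := card_le_rk_of_indep (transversalMatroid_indep.2 hI) hIX
  have hlt : rk (transversalMatroid V) X < X.card := by
    simpa [meetingIndices] using h ∅ (Finset.empty_subset X)
  omega

lemma IsCyclicSet.rk_transversalMatroid (hX : IsCyclicSet (transversalMatroid V) X) :
    rk (transversalMatroid V) X = (meetingIndices V X).card := by
  refine le_antisymm (by simpa using rk_transversalMatroid_le V X X) ?_
  obtain ⟨Y, hYX, hY⟩ := exists_card_meetingIndices_add_card_sdiff_le_rk V X
  rcases hYX.eq_or_ssubset with rfl | hssub
  · simpa using hY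
  · obtain ⟨e, heX, heY⟩ := Finset.exists_of_ssubset hssub
    have herase := rk_transversalMatroid_le V (X.erase e) Y
    have hmem : e ∈ X \ Y := Finset.mem_sdiff.2 ⟨heX, heY⟩
    rw [hX.rk_erase heX, Finset.erase_sdiff_comm, Finset.card_erase_of_mem hmem] at herase
    have := Finset.card_pos.2 ⟨e, hmem⟩
    omega

end Finite

variable [Fintype α]

lemma rk_compl_add_one_le (V : ι → Finset α) (i : ι) :
    rk (transversalMatroid V) (V i)ᶜ + 1 ≤ Fintype.card ι := by
  have hi : i ∉ meetingIndices V (V i)ᶜ := by simp [mem_meetingIndices]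
  have hle := rk_transversalMatroid_le V (V i)ᶜ (V i)ᶜ
  have hlt := Finset.card_lt_univ_of_notMem hi
  simp only [sdiff_self, Finset.bot_eq_empty, Finset.card_empty] at hle
  omega

lemma IsCyclicSet.countP_cyclicCore_compl_add_rk (hX : IsCyclicSet (transversalMatroid V) X) :
    (Finset.univ.val.map fun i => cyclicCore (transversalMatroid V) (V i)ᶜ).countP (X ≤ ·) +
      rk (transversalMatroid V) X = Fintype.card ι := by
  classical
  have hcount : ({i | X ⊆ cyclicCore (transversalMatroid V) (V i)ᶜ} : Finset ι) =
      (meetingIndices V X)ᶜ := by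
    ext i
    simp [hX.subset_cyclicCore_iff, mem_meetingIndices, Finset.subset_iff]
  have hcard := Finset.card_compl_add_card (meetingIndices V X)
  rw [← hcount, ← hX.rk_transversalMatroid] at hcard
  rw [← hcard, Multiset.countP_map]
  rfl

lemma map_cyclicCore_compl_eq (h : transversalMatroid V = transversalMatroid V') :
    (Finset.univ.val.map fun i => cyclicCore (transversalMatroid V) (V i)ᶜ) =
      Finset.univ.val.map fun i => cyclicCore (transversalMatroid V') (V' i)ᶜ := by
  refine multiset_eq_of_countP_le_eq fun X hX => ?_
  have hcyc : IsCyclicSet (transversalMatroid V) X := by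
    simp only [h, Multiset.mem_add, Multiset.mem_map] at hX
    rw [h]
    rcases hX with ⟨i, -, rfl⟩ | ⟨i, -, rfl⟩ <;> exact isCyclicSet_cyclicCore
  have hV := hcyc.countP_cyclicCore_compl_add_rk
  have hV' := (h ▸ hcyc).countP_cyclicCore_compl_add_rk
  rw [h] at hV ⊢
  omega

lemma sum_card_add_sum_rk_compl (V : ι → Finset α) :
    ∑ i, (V i).card + ∑ i, rk (transversalMatroid V) (V i)ᶜ +
        ((Finset.univ.val.map fun i => cyclicCore (transversalMatroid V) (V i)ᶜ).map
          Finset.card).sum =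
      Fintype.card ι * Fintype.card α +
        ((Finset.univ.val.map fun i => cyclicCore (transversalMatroid V) (V i)ᶜ).map
          (rk (transversalMatroid V))).sum := by
  have hterm : ∀ i, (V i).card + rk (transversalMatroid V) (V i)ᶜ +
      (cyclicCore (transversalMatroid V) (V i)ᶜ).card =
      Fintype.card α + rk (transversalMatroid V) (cyclicCore (transversalMatroid V) (V i)ᶜ) := by
    intro i
    have hrk := rk_cyclicCore_add_card_sdiff (M := transversalMatroid V) (X := (V i)ᶜ)
      (Set.subset_univ _)
    have hcore := Finset.card_sdiff_add_card_eq_card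
      (cyclicCore_subset (M := transversalMatroid V) (X := (V i)ᶜ))
    have hcompl := Finset.card_add_card_compl (V i)
    omega
  simpa [Finset.sum_add_distrib] using Finset.sum_congr rfl fun i (_ : i ∈ Finset.univ) => hterm i

lemma sum_card_add_sum_rk_compl_eq (h : transversalMatroid V = transversalMatroid V') :
    ∑ i, (V i).card + ∑ i, rk (transversalMatroid V) (V i)ᶜ =
      ∑ i, (V' i).card + ∑ i, rk (transversalMatroid V') (V' i)ᶜ := by
  have hV := sum_card_add_sum_rk_compl V
  have hV' := sum_card_add_sum_rk_compl V'
  rw [map_cyclicCore_compl_eq h, h] at hV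
  rw [h]
  omega

lemma sum_card_le_of_card_le_rk_compl_add_one
    (hV : ∀ i, Fintype.card ι ≤ rk (transversalMatroid V) (V i)ᶜ + 1)
    (h : transversalMatroid V = transversalMatroid V') :
    ∑ i, (V i).card ≤ ∑ i, (V' i).card := by
  have hrk : ∑ i, rk (transversalMatroid V') (V' i)ᶜ ≤ ∑ i, rk (transversalMatroid V) (V i)ᶜ :=
    Finset.sum_le_sum fun i _ => Nat.le_of_add_le_add_right
      ((rk_compl_add_one_le V' i).trans (hV i))
  have := sum_card_add_sum_rk_compl_eq h
  omega

lemma card_le_rk_compl_add_one_iff (V : ι → Finset α) :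
    (∀ i, Fintype.card ι ≤ rk (transversalMatroid V) (V i)ᶜ + 1) ↔
      ∀ T : Finset ι, T.Nonempty →
        (T.sup fun i => (V i).card) + T.card ≤ (T.biUnion V).card + 1 := by
  classical
  constructor
  · intro h T hT
    obtain ⟨i, hiT, hi⟩ := T.exists_mem_eq_sup hT fun i => (V i).card
    have hindices : meetingIndices V (T.biUnion V)ᶜ ⊆ Tᶜ := by
      intro j hj
      obtain ⟨e, he, hej⟩ := mem_meetingIndices.1 hj
      exact Finset.mem_compl.2 fun hjT =>
        Finset.mem_compl.1 he (Finset.mem_biUnion.2 ⟨j, hjT, hej⟩)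
    have hindices := Finset.card_le_card hindices
    have hsub : V i ⊆ T.biUnion V := Finset.subset_biUnion_of_mem V hiT
    have hrk := rk_transversalMatroid_le V (V i)ᶜ (T.biUnion V)ᶜ
    have hTcard := Finset.card_le_univ T
    have := h i
    have hcard := Finset.card_le_card hsub
    rw [compl_sdiff_compl, Finset.card_sdiff_of_subset hsub] at hrk
    rw [Finset.card_compl] at hindices
    rw [hi]
    omega
  · intro h i
    obtain ⟨Y, hY, hrk⟩ := exists_card_meetingIndices_add_card_sdiff_le_rk V (V i)ᶜ
    have hiT : i ∈ (meetingIndices V Y)ᶜ := by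
      refine Finset.mem_compl.2 fun hi => ?_
      obtain ⟨e, he, hei⟩ := mem_meetingIndices.1 hi
      exact Finset.mem_compl.1 (hY he) hei
    have hunion : (meetingIndices V Y)ᶜ.biUnion V ⊆ Yᶜ := by
      refine Finset.biUnion_subset.2 fun j hj e hej => Finset.mem_compl.2 fun he => ?_
      exact Finset.mem_compl.1 hj (mem_meetingIndices.2 ⟨e, he, hej⟩)
    have hunion := Finset.card_le_card hunion
    have hsup := Finset.le_sup (f := fun i => (V i).card) hiT
    have hT := h _ ⟨i, hiT⟩
    have := (meetingIndices V Y).card_le_univ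
    have hYα := Y.card_le_univ
    have hViα := (V i).card_le_univ
    rw [Finset.card_sdiff_of_subset hY, Finset.card_compl] at hrk
    simp only [Finset.card_compl] at hT hunion hsup
    omega

end RankFormula

section MinimalPresentations

variable {ι α : Type*} [Fintype ι] {V : ι → Finset α}

lemma mem_closure_compl_of_minimal [Finite α] [DecidableEq ι]
    (hV : ∀ V' : ι → Finset α, transversalMatroid V' = transversalMatroid V →
      ∑ i, (V i).card ≤ ∑ i, (V' i).card) (i : ι) {e : α} :
    e ∈ (transversalMatroid (Function.update V i ∅)).closure (V i)ᶜ := by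
  classical
  by_cases he : e ∈ V i
  · by_contra hcl
    have hle := hV _ (transversalMatroid_update_erase hcl)
    refine hle.not_gt (Finset.sum_lt_sum (fun j _ => Finset.card_le_card ?_)
      ⟨i, Finset.mem_univ i, ?_⟩)
    · exact update_le_self_iff.2 (Finset.erase_subset e (V i)) j
    · simpa using Finset.card_erase_lt_of_mem he
  · exact Matroid.mem_closure_of_mem _ (by simpa using he)

lemma card_le_rk_compl_add_one_of_minimal [Fintype α] [DecidableEq α]
    (hrk : Fintype.card ι ≤ rk (transversalMatroid V) Finset.univ)
    (hV : ∀ V' : ι → Finset α, transversalMatroid V' = transversalMatroid V →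
      ∑ i, (V i).card ≤ ∑ i, (V' i).card) (i : ι) :
    Fintype.card ι ≤ rk (transversalMatroid V) (V i)ᶜ + 1 := by
  classical
  have hclosure : (transversalMatroid (Function.update V i ∅)).closure (Finset.univ : Finset α) =
      (transversalMatroid (Function.update V i ∅)).closure ((V i)ᶜ : Finset α) := by
    refine Set.Subset.antisymm (fun e _ => ?_) (Matroid.closure_subset_closure _ (by simp))
    simpa using mem_closure_compl_of_minimal hV i (e := e)
  calc
    _ ≤ rk (transversalMatroid V) Finset.univ := hrk
    _ ≤ rk (transversalMatroid (Function.update V i ∅)) Finset.univ + 1 :=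
      rk_transversalMatroid_le_update_empty V i _
    _ = rk (transversalMatroid (Function.update V i ∅)) (V i)ᶜ + 1 := by
      rw [rk_eq_of_closure_eq hclosure]
    _ ≤ _ := Nat.add_le_add_right
      (rk_transversalMatroid_mono (update_le_self_iff.2 (Finset.empty_subset _)) _) 1

end MinimalPresentations

section GenericMatrix

variable {ι α R : Type*} [DecidableEq α] [CommRing R] [IsDomain R] {V W : ι → Finset α}

lemma transversalMatroid_eq_iff_linearIndepOn_col [Finite ι] [Finite α] (R : Type*) [CommRing R]
    [IsDomain R] : transversalMatroid V = transversalMatroid W ↔ ∀ S : Finset α,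
      (LinearIndepOn (FractionRing (MvPolynomial (ι × α) R)) (genericMatrix R V).col S ↔
        LinearIndepOn (FractionRing (MvPolynomial (ι × α) R)) (genericMatrix R W).col S) := by
  simp only [transversalMatroid_eq_iff, linearIndepOn_col_genericMatrix_iff]

lemma rank_genericMatrix_le_rk [Finite ι] [Fintype α] (V : ι → Finset α) :
    (genericMatrix R V).rank ≤ rk (transversalMatroid V) Finset.univ := by
  obtain ⟨S, hS, hcard⟩ := exists_linearIndepOn_col_card_eq_rank (genericMatrix R V)
  rw [← hcard]
  exact card_le_rk_of_indep (transversalMatroid_indep.2 (linearIndepOn_col_genericMatrix_iff.1 hS))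
    S.subset_univ

theorem statement11_general [Fintype ι] [Fintype α]
    (hV : (genericMatrix R V).rank = Fintype.card ι) :
    (∀ V' : ι → Finset α,
      (∀ S : Finset α,
        LinearIndepOn (FractionRing (MvPolynomial (ι × α) R)) (genericMatrix R V').col S ↔
          LinearIndepOn (FractionRing (MvPolynomial (ι × α) R)) (genericMatrix R V).col S) →
      ∑ i, (V i).card ≤ ∑ i, (V' i).card) ↔
    ∀ T : Finset ι, T.Nonempty →
      (T.sup fun i => (V i).card) + T.card ≤ (T.biUnion V).card + 1 := by
  classical
  simp only [← transversalMatroid_eq_iff_linearIndepOn_col R, ← card_le_rk_compl_add_one_iff]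
  exact ⟨fun hmin => card_le_rk_compl_add_one_of_minimal (hV ▸ rank_genericMatrix_le_rk V) hmin,
    fun h V' hV' => sum_card_le_of_card_le_rk_compl_add_one h hV'.symm⟩

end GenericMatrix

section VariableValuedMatrix

variable {k n : ℕ}

lemma colsIndep_iff_linearIndepOn_col {F : Type*} [Field F] {A : Matrix (Fin k) (Fin n) F}
    {S : Finset (Fin n)} : ColsIndep A S ↔ LinearIndepOn F A.col S :=
  Iff.rfl

lemma MV_eq_genericMatrix (V : Fin k → Finset (Fin n)) : MV k n V = genericMatrix ℝ V :=
  rfl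

end VariableValuedMatrix

/-- if `M(V)` is a positroid of rank `k`, then `M_V` has the smallest
total number of nonzero variable entries among all variable-valued matrices with the
same column matroid iff every nonempty `T ⊆ {1,…,k}` satisfies
`|∪_{i∈T} V_i| ≥ max_{i∈T} |V_i| + |T| − 1`. -/
theorem statement11 (k n : ℕ) (V : Fin k → Finset (Fin n))
    (hpos : IsPositroidRep k n V) :
    ((∀ V' : Fin k → Finset (Fin n),
        (∀ S : Finset (Fin n), ColsIndep (MV k n V') S ↔ ColsIndep (MV k n V) S) →
        ∑ i : Fin k, (V i).card ≤ ∑ i : Fin k, (V' i).card) ↔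
      (∀ T : Finset (Fin k), T.Nonempty →
        (T.sup fun i => (V i).card) + T.card ≤ (T.biUnion V).card + 1)) := by
  simp only [IsPositroidRep, colsIndep_iff_linearIndepOn_col, MV_eq_genericMatrix] at hpos ⊢
  obtain ⟨A, hA, -, hAV⟩ := hpos
  exact statement11_general ((rank_eq_of_linearIndepOn_col_iff hAV).symm.trans (by simpa using hA))
end
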